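/- Suppose A is finite and the functions g_i : A → ℝ_+ satisfy Σ_{i=0}^∞ Σ_{k=i}^∞ log max{‖g_k‖_∞, ‖g_k^{−1}‖_∞} < ∞. Then there exists exactly one conformal measure for the product-type potential g(x) = g_0 Π_{i=1}^∞ g_i(x_i); moreover this measure is ergodic for the shift. -/

import Mathlib

open MeasureTheory

/-- The left shift on `A^ℕ`. -/
def shiftMap (A : Type*) : (ℕ → A) → ℕ → A := fun x n => x (n + 1)

/-- `ν` is conformal for the potential `G` with parameter `lam`:
`ν(T(C)) = lam ∫_C G dν` for every measurable `C` on which the shift is injective. -/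
def IsConformalFor {A : Type*} [MeasurableSpace A] (G : (ℕ → A) → ℝ) (lam : ℝ)
    (ν : Measure (ℕ → A)) : Prop :=
  ∀ C : Set (ℕ → A), MeasurableSet C → Set.InjOn (shiftMap A) C →
    ν (shiftMap A '' C) = ENNReal.ofReal (lam * ∫ x in C, G x ∂ν)

/-!
Resampling the coordinate `i` of a point from a fixed law `p i` is a Markov step, and a probability
measure on a product space is invariant under all these steps if and only if it is the product of
the normalised `p i`. Invariance at one coordinate is easy to transport: a density whose dependence
on that coordinate is a factor `γ i` turns `p i` into `γ i • p i`, and prepending an independent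
letter moves it from coordinate `n` to coordinate `n + 1`.

Conformality of `ν` says that prepending a letter chosen by the counting measure turns `ν` into a
multiple of `G • ν`. When `γ n` is the factor of `G` at the coordinate `n`, the coordinates of a
conformal measure therefore have the laws `p 0 = (γ 0)⁻¹ • count` and
`p (n + 1) = (γ (n + 1))⁻¹ • p n` up to normalisation, which determines the measure. Conversely, for
the product measure with these laws both sides of the conformality equation are invariant under
resampling from the same laws, hence proportional. Ergodicity is Kolmogorov's zero-one law.
-/

open Function Set
open scoped ENNReal

section Resampling

variable {ι : Type*} {X : ι → Type*} [DecidableEq ι]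

/-- `G` depends on the coordinate `i` through the factor `γ`, stated without division. -/
def HasCoordFactor (i : ι) (γ : X i → ℝ≥0∞) (G : (∀ i, X i) → ℝ≥0∞) : Prop :=
  ∀ x b, G (update x i b) * γ (x i) = G x * γ b

lemma HasCoordFactor.update_mul_comm {i : ι} {γ : X i → ℝ≥0∞} {G : (∀ i, X i) → ℝ≥0∞}
    (h : HasCoordFactor i γ G) (x : ∀ i, X i) (a b : X i) :
    G (update x i b) * γ a = G (update x i a) * γ b := by
  simpa only [update_idem, update_self] using h (update x i a) b

lemma HasCoordFactor.inv {i : ι} {γ : X i → ℝ≥0∞} {G : (∀ i, X i) → ℝ≥0∞}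
    (h : HasCoordFactor i γ G) (hγ0 : ∀ a, γ a ≠ 0) (hγt : ∀ a, γ a ≠ ∞) :
    HasCoordFactor i (fun a => (γ a)⁻¹) (fun x => (G x)⁻¹) := by
  intro x b
  rw [← ENNReal.mul_inv (.inr (hγt _)) (.inr (hγ0 _)), h x b,
    ENNReal.mul_inv (.inr (hγt _)) (.inr (hγ0 _))]

variable [∀ i, MeasurableSpace (X i)]

lemma measurable_lintegral_update (i : ι) (p : Measure (X i)) [SFinite p]
    {F : (∀ i, X i) → ℝ≥0∞} (hF : Measurable F) :
    Measurable fun x : ∀ i, X i => ∫⁻ a, F (update x i a) ∂p :=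
  Measurable.lintegral_prod_right' (f := fun z : (∀ i, X i) × X i => F (update z.1 i z.2))
    (hF.comp measurable_update')

variable {ν : Measure (∀ i, X i)}

/-- Up to the factor `p univ`, which allows laws `p` that are not normalised, the measure `ν` does
not change when the coordinate `i` is replaced by an independent letter with law `p`: the
single-site DLR equation of an independent system. -/
def IsResamplingInvariant (i : ι) (p : Measure (X i)) (ν : Measure (∀ i, X i)) : Prop :=
  ∀ F : (∀ i, X i) → ℝ≥0∞, Measurable F →
    ∫⁻ x, ∫⁻ a, F (update x i a) ∂p ∂ν = p univ * ∫⁻ x, F x ∂ν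

namespace IsResamplingInvariant

section OneSite

variable {i : ι} {p : Measure (X i)}

lemma smul_measure (h : IsResamplingInvariant i p ν) (c : ℝ≥0∞) :
    IsResamplingInvariant i p (c • ν) := by
  intro F hF
  rw [lintegral_smul_measure, lintegral_smul_measure, h F hF, smul_eq_mul, smul_eq_mul,
    mul_left_comm]

lemma smul_law (h : IsResamplingInvariant i p ν) {c : ℝ≥0∞} (hc : c ≠ ∞) :
    IsResamplingInvariant i (c • p) ν := by
  intro F hF
  simp only [lintegral_smul_measure, smul_eq_mul, Measure.smul_apply]
  rw [lintegral_const_mul' _ _ hc, h F hF, mul_assoc]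

lemma withDensity [IsFiniteMeasure p] [NeZero p] {γ : X i → ℝ≥0∞} {G : (∀ i, X i) → ℝ≥0∞}
    (h : IsResamplingInvariant i p ν) (hγ : Measurable γ) (hG : Measurable G)
    (hGγ : HasCoordFactor i γ G) :
    IsResamplingInvariant i (p.withDensity γ) (ν.withDensity G) := by
  intro F hF
  have : Measurable fun z : (∀ i, X i) × X i => update z.1 i z.2 := measurable_update'
  have hγF : Measurable fun x => ∫⁻ a, γ a * F (update x i a) ∂p :=
    Measurable.lintegral_prod_right' (f := fun z : (∀ i, X i) × X i => γ z.2 * F (update z.1 i z.2))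
      (by fun_prop)
  have hGF : Measurable fun x => ∫⁻ a, G (update x i a) * F (update x i a) ∂p :=
    measurable_lintegral_update i p (hG.mul hF)
  have hresampled : ∀ x b, G (update x i b) * ∫⁻ a, γ a * F (update (update x i b) i a) ∂p
      = γ b * ∫⁻ a, G (update x i a) * F (update x i a) ∂p := by
    intro x b
    simp only [update_idem]
    rw [← lintegral_const_mul _ (by fun_prop), ← lintegral_const_mul _ (by fun_prop)]
    refine lintegral_congr fun a => ?_
    rw [← mul_assoc, hGγ.update_mul_comm x a b]
    ring
  have hGF_invariant : ∫⁻ x, ∫⁻ a, G (update x i a) * F (update x i a) ∂p ∂ν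
      = p univ * ∫⁻ x, G x * F x ∂ν := h _ (hG.mul hF)
  have hlaw : ∀ x, ∫⁻ a, F (update x i a) ∂p.withDensity γ = ∫⁻ a, γ a * F (update x i a) ∂p :=
    fun x => lintegral_withDensity_eq_lintegral_mul _ hγ (by fun_prop)
  simp only [hlaw]
  rw [← ENNReal.mul_right_inj (NeZero.ne (p univ)) (measure_ne_top p univ),
    withDensity_apply _ .univ, Measure.restrict_univ,
    lintegral_withDensity_eq_lintegral_mul _ hG hγF, lintegral_withDensity_eq_lintegral_mul _ hG hF]
  calc p univ * ∫⁻ x, G x * ∫⁻ a, γ a * F (update x i a) ∂p ∂ν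
      = ∫⁻ x, ∫⁻ b, G (update x i b) * ∫⁻ a, γ a * F (update (update x i b) i a) ∂p ∂p ∂ν :=
        (h _ (hG.mul hγF)).symm
    _ = (∫⁻ b, γ b ∂p) * ∫⁻ x, ∫⁻ a, G (update x i a) * F (update x i a) ∂p ∂ν := by
        simp only [hresampled, lintegral_mul_const _ hγ]
        exact lintegral_const_mul _ hGF
    _ = p univ * ((∫⁻ b, γ b ∂p) * ∫⁻ x, G x * F x ∂ν) := by
        rw [hGF_invariant, mul_left_comm]

lemma measure_pi_insert (h : IsResamplingInvariant i p ν) {s : Finset ι} (hi : i ∉ s)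
    {t : ∀ i, Set (X i)} (ht : ∀ i, MeasurableSet (t i)) :
    p univ * ν ((↑(insert i s) : Set ι).pi t) = p (t i) * ν ((s : Set ι).pi t) := by
  have hbox : ∀ s : Finset ι, MeasurableSet ((s : Set ι).pi t) := fun s =>
    .pi s.countable_toSet fun j _ => ht j
  have hupdate : ∀ x a,
      ((↑(insert i s) : Set ι).pi t).indicator (1 : (∀ i, X i) → ℝ≥0∞) (update x i a)
      = (t i).indicator 1 a * ((s : Set ι).pi t).indicator 1 x := by
    intro x a
    have hmem : update x i a ∈ (↑(insert i s) : Set ι).pi t ↔ a ∈ t i ∧ x ∈ (s : Set ι).pi t := by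
      rw [update_mem_pi_iff, ← Finset.coe_erase, Finset.erase_insert hi, and_comm,
        imp_iff_right (Finset.mem_coe.2 (Finset.mem_insert_self i s))]
    classical
    simp only [indicator_apply, hmem, ite_and, Pi.one_apply, ite_mul, one_mul, zero_mul]
  rw [← lintegral_indicator_one (hbox _), ← h _ (measurable_one.indicator (hbox _))]
  simp only [hupdate, lintegral_mul_const _ (measurable_one.indicator (ht i)),
    lintegral_indicator_one (ht i)]
  rw [lintegral_const_mul _ (measurable_one.indicator (hbox s)), lintegral_indicator_one (hbox s)]

end OneSite

lemma measure_pi {P : ∀ i, Measure (X i)} [∀ i, IsProbabilityMeasure (P i)]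
    (h : ∀ i, IsResamplingInvariant i (P i) ν) (s : Finset ι) {t : ∀ i, Set (X i)}
    (ht : ∀ i, MeasurableSet (t i)) :
    ν ((s : Set ι).pi t) = (∏ i ∈ s, P i (t i)) * ν univ := by
  induction s using Finset.induction_on with
  | empty => simp
  | insert i s hi ih =>
    rw [Finset.prod_insert hi, mul_assoc, ← ih, ← (h i).measure_pi_insert hi ht, measure_univ,
      one_mul]

lemma eq_smul_infinitePi {P : ∀ i, Measure (X i)} [∀ i, IsProbabilityMeasure (P i)]
    [IsFiniteMeasure ν] (h : ∀ i, IsResamplingInvariant i (P i) ν) :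
    ν = ν univ • Measure.infinitePi P := by
  obtain rfl | hν := eq_zero_or_neZero ν
  · simp
  have hnormalized : (ν univ)⁻¹ • ν = Measure.infinitePi P := by
    refine Measure.eq_infinitePi _ fun s t ht => ?_
    rw [Measure.smul_apply, measure_pi h s ht, smul_eq_mul, mul_left_comm,
      ENNReal.inv_mul_cancel (NeZero.ne _) (measure_ne_top ν univ), mul_one]
  rw [← hnormalized, smul_smul, ENNReal.mul_inv_cancel (NeZero.ne _) (measure_ne_top ν univ),
    one_smul]

end IsResamplingInvariant

lemma map_update_infinitePi_prod (P : ∀ i, Measure (X i)) [∀ i, IsProbabilityMeasure (P i)]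
    (i : ι) :
    ((Measure.infinitePi P).prod (P i)).map (fun z => update z.1 i z.2) = Measure.infinitePi P := by
  refine Measure.eq_infinitePi _ fun s t ht => ?_
  have hpreimage : (fun z : (∀ i, X i) × X i => update z.1 i z.2) ⁻¹' (s : Set ι).pi t
      = (↑(s.erase i) : Set ι).pi t ×ˢ {a | i ∈ s → a ∈ t i} := by
    ext ⟨x, a⟩
    rw [mem_preimage, update_mem_pi_iff, ← Finset.coe_erase]
    rfl
  rw [Measure.map_apply measurable_update' (.pi s.countable_toSet fun j _ => ht j), hpreimage,
    Measure.prod_prod, Measure.infinitePi_pi _ fun j _ => ht j]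
  by_cases hi : i ∈ s
  · simp only [hi, true_imp_iff, ofPred_mem_eq]
    exact Finset.prod_erase_mul s _ hi
  · simp [hi]

lemma isResamplingInvariant_infinitePi (P : ∀ i, Measure (X i)) [∀ i, IsProbabilityMeasure (P i)]
    (i : ι) : IsResamplingInvariant i (P i) (Measure.infinitePi P) := by
  intro F hF
  have hFupdate : Measurable fun z : (∀ i, X i) × X i => F (update z.1 i z.2) :=
    hF.comp measurable_update'
  rw [← lintegral_prod _ hFupdate.aemeasurable, ← lintegral_map hF measurable_update',
    map_update_infinitePi_prod, measure_univ, one_mul]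

theorem forall_isResamplingInvariant_iff {p : ∀ i, Measure (X i)} [∀ i, IsFiniteMeasure (p i)]
    [∀ i, NeZero (p i)] [IsFiniteMeasure ν] :
    (∀ i, IsResamplingInvariant i (p i) ν) ↔
      ν = ν univ • Measure.infinitePi fun i => (p i univ)⁻¹ • p i := by
  constructor
  · exact fun h => IsResamplingInvariant.eq_smul_infinitePi fun i =>
      (h i).smul_law (ENNReal.inv_ne_top.2 (NeZero.ne _))
  · intro h i
    rw [h, ← one_smul ℝ≥0∞ (p i),
      ← ENNReal.mul_inv_cancel (NeZero.ne (p i univ)) (measure_ne_top (p i) univ), mul_smul]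
    exact ((isResamplingInvariant_infinitePi _ i).smul_law (measure_ne_top _ _)).smul_measure _

lemma IsResamplingInvariant.eq_smul {p : ∀ i, Measure (X i)} [∀ i, IsFiniteMeasure (p i)]
    [∀ i, NeZero (p i)] {μ ν : Measure (∀ i, X i)} [IsFiniteMeasure μ] [IsFiniteMeasure ν]
    [NeZero ν] (hμ : ∀ i, IsResamplingInvariant i (p i) μ)
    (hν : ∀ i, IsResamplingInvariant i (p i) ν) : μ = (μ univ / ν univ) • ν := by
  rw [forall_isResamplingInvariant_iff] at hμ hν
  set P := Measure.infinitePi fun i => (p i univ)⁻¹ • p i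
  calc μ = μ univ • P := hμ
    _ = (μ univ / ν univ) • ν univ • P := by
      rw [smul_smul, ENNReal.div_mul_cancel (NeZero.ne _) (measure_ne_top ν univ)]
    _ = (μ univ / ν univ) • ν := by rw [← hν]

end Resampling

section Shift

variable {A : Type*}

lemma shiftMap_iterate_apply (n : ℕ) (x : ℕ → A) (k : ℕ) : (shiftMap A)^[n] x k = x (k + n) := by
  induction n generalizing x with
  | zero => rfl
  | succ n ih => rw [iterate_succ_apply, ih, shiftMap, add_assoc]

variable [MeasurableSpace A]

lemma measurable_shiftMap_iterate_iSup (n : ℕ) :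
    Measurable[⨆ k ≥ n, MeasurableSpace.comap (fun x : ℕ → A => x k) inferInstance]
      (shiftMap A)^[n] := by
  refine @measurable_pi_lambda _ _ _ (_) _ _ fun k => ?_
  simp only [shiftMap_iterate_apply]
  exact (comap_measurable _).mono
    (le_iSup₂_of_le (f := fun k (_ : k ≥ n) =>
      MeasurableSpace.comap (fun x : ℕ → A => x k) inferInstance) (k + n) (Nat.le_add_left n k)
      le_rfl) le_rfl

theorem preErgodic_shiftMap_infinitePi (P : ℕ → Measure A) [∀ n, IsProbabilityMeasure (P n)] :
    PreErgodic (shiftMap A) (Measure.infinitePi P) := by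
  refine ⟨fun s hs hinv => ?_⟩
  have hindep : ProbabilityTheory.iIndepFun (fun (n : ℕ) (x : ℕ → A) => x n)
      (Measure.infinitePi P) :=
    ProbabilityTheory.iIndepFun_infinitePi (X := fun _ a => a) fun _ => measurable_id
  have htail : MeasurableSet[Filter.limsup (fun n : ℕ =>
      MeasurableSpace.comap (fun x : ℕ → A => x n) inferInstance) Filter.atTop] s := by
    rw [Filter.limsup_eq_iInf_iSup_of_nat, MeasurableSpace.measurableSet_iInf]
    intro n
    rw [← (show IsFixedPt (preimage (shiftMap A)) s from hinv).preimage_iterate n]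
    exact measurable_shiftMap_iterate_iSup n hs
  rw [Filter.eventuallyConst_set', ae_eq_empty, ae_eq_univ, prob_compl_eq_zero_iff hs]
  exact ProbabilityTheory.measure_zero_or_one_of_measurableSet_limsup_atTop
    (fun n => (measurable_pi_apply n).comap_le) hindep.iIndep htail

end Shift

section Cons

variable {A : Type*}

/-- The sequence `a, y 0, y 1, …`; the maps `seqCons a` are the inverse branches of the shift. -/
def seqCons (a : A) (y : ℕ → A) : ℕ → A
  | 0 => a
  | n + 1 => y n

lemma shiftMap_seqCons (a : A) (y : ℕ → A) : shiftMap A (seqCons a y) = y := rfl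

lemma seqCons_shiftMap (x : ℕ → A) : seqCons (x 0) (shiftMap A x) = x := by
  ext (_ | n) <;> rfl

lemma update_seqCons_zero (a b : A) (y : ℕ → A) : update (seqCons b y) 0 a = seqCons a y := by
  ext (_ | n) <;> rfl

lemma update_seqCons_succ (b : A) (y : ℕ → A) (n : ℕ) (a : A) :
    update (seqCons b y) (n + 1) a = seqCons b (update y n a) := by
  ext (_ | k)
  · rfl
  · simp only [seqCons, update_apply, Nat.add_right_cancel_iff]

variable [MeasurableSpace A]

lemma measurable_uncurry_seqCons : Measurable (uncurry (seqCons (A := A))) := by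
  refine measurable_pi_lambda _ fun n => ?_
  cases n with
  | zero => exact measurable_fst
  | succ n => exact (measurable_pi_apply n).comp measurable_snd

lemma measurable_seqCons (a : A) : Measurable (seqCons a) :=
  measurable_uncurry_seqCons.comp measurable_prodMk_left

/-- The law of `seqCons a y` for independent `a` and `y` with laws `q` and `ν`. When `q` is the
counting measure it is the sum of the images of `ν` under the inverse branches of the shift. -/
noncomputable def consMeasure (q : Measure A) (ν : Measure (ℕ → A)) : Measure (ℕ → A) :=
  (q.prod ν).map (uncurry seqCons)

variable {q : Measure A} {ν : Measure (ℕ → A)}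

instance isFiniteMeasure_consMeasure [IsFiniteMeasure q] [IsFiniteMeasure ν] :
    IsFiniteMeasure (consMeasure q ν) :=
  Measure.isFiniteMeasure_map _ _

variable [SFinite ν]

lemma consMeasure_univ : consMeasure q ν univ = q univ * ν univ := by
  rw [consMeasure, Measure.map_apply measurable_uncurry_seqCons .univ, preimage_univ,
    ← univ_prod_univ, Measure.prod_prod]

lemma lintegral_consMeasure {F : (ℕ → A) → ℝ≥0∞} (hF : Measurable F) :
    ∫⁻ x, F x ∂consMeasure q ν = ∫⁻ a, ∫⁻ y, F (seqCons a y) ∂ν ∂q := by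
  rw [consMeasure, lintegral_map hF measurable_uncurry_seqCons,
    lintegral_prod (fun z => F (uncurry seqCons z))
      (hF.comp measurable_uncurry_seqCons).aemeasurable]
  rfl

lemma isResamplingInvariant_zero_consMeasure [SFinite q] :
    IsResamplingInvariant 0 q (consMeasure q ν) := by
  intro F hF
  have hFcons : Measurable fun z : (ℕ → A) × A => F (seqCons z.2 z.1) :=
    hF.comp (measurable_uncurry_seqCons.comp measurable_swap)
  rw [lintegral_consMeasure (measurable_lintegral_update 0 q hF), lintegral_consMeasure hF]
  simp only [update_seqCons_zero]
  rw [lintegral_const, mul_comm, lintegral_lintegral_swap hFcons.aemeasurable]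

lemma IsResamplingInvariant.consMeasure_succ {n : ℕ} {p : Measure A} [SFinite p]
    (h : IsResamplingInvariant n p ν) :
    IsResamplingInvariant (n + 1) p (consMeasure q ν) := by
  intro F hF
  rw [lintegral_consMeasure (measurable_lintegral_update (n + 1) p hF), lintegral_consMeasure hF]
  simp only [update_seqCons_succ]
  rw [← lintegral_const_mul _ (Measurable.lintegral_prod_right'
    (f := fun z : A × (ℕ → A) => F (seqCons z.1 z.2)) (hF.comp measurable_uncurry_seqCons))]
  exact lintegral_congr fun a => h _ (hF.comp (measurable_seqCons a))

end Cons

section Conformal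

variable {A : Type*} [Countable A] [MeasurableSpace A] [MeasurableSingletonClass A]
  {ν κ : Measure (ℕ → A)} [SFinite ν]

lemma measure_shiftMap_image {C : Set (ℕ → A)} (hC : MeasurableSet C)
    (hinj : InjOn (shiftMap A) C) : ν (shiftMap A '' C) = consMeasure Measure.count ν C := by
  have himage : shiftMap A '' C = ⋃ a, seqCons a ⁻¹' C := by
    ext y
    simp only [mem_image, mem_iUnion, mem_preimage]
    constructor
    · rintro ⟨x, hx, rfl⟩
      exact ⟨x 0, by rwa [seqCons_shiftMap]⟩
    · exact fun ⟨a, ha⟩ => ⟨_, ha, shiftMap_seqCons a y⟩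
  have hdisj : Pairwise (Disjoint on fun a => seqCons a ⁻¹' C) := fun a b hab =>
    disjoint_left.2 fun y ha hb => hab (congrFun (hinj ha hb rfl) 0)
  rw [himage, measure_iUnion hdisj fun a => measurable_seqCons a hC, consMeasure,
    Measure.map_apply measurable_uncurry_seqCons hC,
    Measure.prod_apply (measurable_uncurry_seqCons hC), lintegral_count]
  rfl

lemma forall_measure_shiftMap_image_eq_iff :
    (∀ C, MeasurableSet C → InjOn (shiftMap A) C → ν (shiftMap A '' C) = κ C) ↔
      consMeasure Measure.count ν = κ := by
  refine ⟨fun h => ?_, fun h C hC hinj => h ▸ measure_shiftMap_image hC hinj⟩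
  have hcover : ⋃ a : A, {x : ℕ → A | x 0 = a} = univ := iUnion_eq_univ_iff.2 fun x => ⟨x 0, rfl⟩
  refine (Measure.ext_iff_of_iUnion_eq_univ hcover).2 fun a => Measure.ext fun C hC => ?_
  have hCa : MeasurableSet (C ∩ {x | x 0 = a}) :=
    hC.inter ((measurableSet_singleton a).preimage (measurable_pi_apply 0))
  have hinj : InjOn (shiftMap A) (C ∩ {x | x 0 = a}) := by
    rintro x ⟨-, hx⟩ y ⟨-, hy⟩ hxy
    rw [← seqCons_shiftMap x, ← seqCons_shiftMap y, hxy, hx, hy]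
  rw [Measure.restrict_apply hC, Measure.restrict_apply hC, ← measure_shiftMap_image hCa hinj,
    h _ hCa hinj]

theorem isConformalFor_iff {G : (ℕ → A) → ℝ} (hG : Integrable G ν) (hG0 : 0 ≤ G) {lam : ℝ}
    (hlam : 0 ≤ lam) :
    IsConformalFor G lam ν ↔ consMeasure Measure.count ν =
      ENNReal.ofReal lam • ν.withDensity fun x => ENNReal.ofReal (G x) := by
  rw [← forall_measure_shiftMap_image_eq_iff]
  refine forall₃_congr fun C hC _ => ?_
  rw [ENNReal.ofReal_mul hlam, Measure.smul_apply, withDensity_apply _ hC, smul_eq_mul,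
    ofReal_integral_eq_lintegral_ofReal hG.restrict (ae_of_all _ hG0)]

end Conformal

section SiteLaw

lemma neZero_withDensity {Ω : Type*} [MeasurableSpace Ω] {μ : Measure Ω} [NeZero μ]
    {f : Ω → ℝ≥0∞} (hf : AEMeasurable f μ) (hf0 : ∀ ω, f ω ≠ 0) : NeZero (μ.withDensity f) :=
  ⟨fun h => NeZero.ne μ (Measure.absolutelyContinuous_zero_iff.1
    (h ▸ withDensity_absolutelyContinuous' hf (ae_of_all _ hf0)))⟩

variable {A : Type*} [MeasurableSpace A] {γ : ℕ → A → ℝ≥0∞}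

/-- The law with density `∏ k < n, (γ k)⁻¹` with respect to the counting measure, not normalised.
Under a conformal measure the coordinate `n` is distributed according to `siteLaw γ (n + 1)`, up to
normalisation. -/
noncomputable def siteLaw (γ : ℕ → A → ℝ≥0∞) : ℕ → Measure A
  | 0 => Measure.count
  | n + 1 => (siteLaw γ n).withDensity fun a => (γ n a)⁻¹

lemma withDensity_siteLaw_succ (hγ : ∀ n, Measurable (γ n)) (hγ0 : ∀ n a, γ n a ≠ 0)
    (hγt : ∀ n a, γ n a ≠ ∞) (n : ℕ) : (siteLaw γ (n + 1)).withDensity (γ n) = siteLaw γ n := by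
  simpa only [siteLaw, inv_inv] using withDensity_inv_same (μ := siteLaw γ n)
    (f := fun a => (γ n a)⁻¹) (hγ n).inv (ae_of_all _ fun a => ENNReal.inv_ne_zero.2 (hγt n a))
    (ae_of_all _ fun a => ENNReal.inv_ne_top.2 (hγ0 n a))

variable [MeasurableSingletonClass A]

lemma isFiniteMeasure_siteLaw [Finite A] (hγ0 : ∀ n a, γ n a ≠ 0) (n : ℕ) :
    IsFiniteMeasure (siteLaw γ n) := by
  induction n with
  | zero => exact inferInstanceAs (IsFiniteMeasure Measure.count)
  | succ n ih =>
    have := Fintype.ofFinite A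
    refine isFiniteMeasure_withDensity ?_
    rw [lintegral_fintype]
    exact ENNReal.sum_ne_top.2 fun a _ =>
      ENNReal.mul_ne_top (ENNReal.inv_ne_top.2 (hγ0 n a)) (measure_ne_top _ _)

lemma siteLaw_neZero [Countable A] [Nonempty A] (hγt : ∀ n a, γ n a ≠ ∞) (n : ℕ) :
    NeZero (siteLaw γ n) := by
  induction n with
  | zero => exact inferInstanceAs (NeZero Measure.count)
  | succ n ih =>
    exact neZero_withDensity (measurable_of_countable _).aemeasurable fun a =>
      ENNReal.inv_ne_zero.2 (hγt n a)

variable [Finite A] {G : (ℕ → A) → ℝ≥0∞} {ν : Measure (ℕ → A)}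

lemma isResamplingInvariant_consMeasure_count [SFinite ν] (hγ0 : ∀ n a, γ n a ≠ 0)
    (h : ∀ n, IsResamplingInvariant n (siteLaw γ (n + 1)) ν) (n : ℕ) :
    IsResamplingInvariant n (siteLaw γ n) (consMeasure Measure.count ν) := by
  have := isFiniteMeasure_siteLaw hγ0
  cases n with
  | zero => exact isResamplingInvariant_zero_consMeasure
  | succ n => exact (h n).consMeasure_succ

variable [Nonempty A]

lemma isResamplingInvariant_of_consMeasure_count_eq [SFinite ν] (hγ0 : ∀ n a, γ n a ≠ 0)
    (hγt : ∀ n a, γ n a ≠ ∞) (hG : Measurable G) (hG0 : ∀ x, G x ≠ 0) (hGt : ∀ x, G x ≠ ∞)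
    (hGγ : ∀ n, HasCoordFactor n (γ n) G) {l : ℝ≥0∞} (hl0 : l ≠ 0) (hlt : l ≠ ∞)
    (h : consMeasure Measure.count ν = l • ν.withDensity G) (n : ℕ) :
    IsResamplingInvariant n (siteLaw γ (n + 1)) ν := by
  have := isFiniteMeasure_siteLaw hγ0
  have := siteLaw_neZero hγt
  have hν : ν = l⁻¹ • (consMeasure Measure.count ν).withDensity fun x => (G x)⁻¹ := by
    rw [h, withDensity_smul_measure, smul_smul, ENNReal.inv_mul_cancel hl0 hlt, one_smul]
    exact (withDensity_inv_same hG (ae_of_all _ hG0) (ae_of_all _ hGt)).symm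
  have htransfer : ∀ n, IsResamplingInvariant n (siteLaw γ n) (consMeasure Measure.count ν) →
      IsResamplingInvariant n (siteLaw γ (n + 1)) ν := by
    intro n hn
    rw [hν]
    exact (hn.withDensity (measurable_of_finite _) hG.inv
      ((hGγ n).inv (hγ0 n) (hγt n))).smul_measure _
  induction n with
  | zero => exact htransfer 0 isResamplingInvariant_zero_consMeasure
  | succ n ih => exact htransfer (n + 1) ih.consMeasure_succ

lemma exists_consMeasure_count_eq [IsFiniteMeasure ν] [NeZero ν] (hγ0 : ∀ n a, γ n a ≠ 0)
    (hγt : ∀ n a, γ n a ≠ ∞) (hG : Measurable G) (hG0 : ∀ x, G x ≠ 0)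
    (hGt : ∫⁻ x, G x ∂ν ≠ ∞) (hGγ : ∀ n, HasCoordFactor n (γ n) G)
    (h : ∀ n, IsResamplingInvariant n (siteLaw γ (n + 1)) ν) :
    ∃ l : ℝ≥0∞, l ≠ 0 ∧ l ≠ ∞ ∧ consMeasure Measure.count ν = l • ν.withDensity G := by
  have := isFiniteMeasure_siteLaw hγ0
  have := siteLaw_neZero hγt
  have := isFiniteMeasure_withDensity hGt
  have := neZero_withDensity (μ := ν) hG.aemeasurable hG0
  have hdensity : ∀ n, IsResamplingInvariant n (siteLaw γ n) (ν.withDensity G) := fun n => by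
    rw [← withDensity_siteLaw_succ (fun n => measurable_of_finite _) hγ0 hγt]
    exact (h n).withDensity (measurable_of_finite _) hG (hGγ n)
  refine ⟨_, ?_, ?_, IsResamplingInvariant.eq_smul
    (isResamplingInvariant_consMeasure_count hγ0 h) hdensity⟩
  · rw [consMeasure_univ]
    exact ENNReal.div_ne_zero.2 ⟨mul_ne_zero (NeZero.ne _) (NeZero.ne _), measure_ne_top _ _⟩
  · exact ENNReal.div_ne_top (measure_ne_top _ _) (NeZero.ne _)

theorem exists_consMeasure_count_eq_iff [IsProbabilityMeasure ν] (hγ0 : ∀ n a, γ n a ≠ 0)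
    (hγt : ∀ n a, γ n a ≠ ∞) (hG : Measurable G) (hG0 : ∀ x, G x ≠ 0) (hGt : ∀ x, G x ≠ ∞)
    (hGi : ∫⁻ x, G x ∂ν ≠ ∞) (hGγ : ∀ n, HasCoordFactor n (γ n) G) :
    (∃ l : ℝ≥0∞, l ≠ 0 ∧ l ≠ ∞ ∧ consMeasure Measure.count ν = l • ν.withDensity G) ↔
      ∀ n, IsResamplingInvariant n (siteLaw γ (n + 1)) ν :=
  ⟨fun ⟨_, hl0, hlt, h⟩ =>
      isResamplingInvariant_of_consMeasure_count_eq hγ0 hγt hG hG0 hGt hGγ hl0 hlt h,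
    exists_consMeasure_count_eq hγ0 hγt hG hG0 hGi hGγ⟩

theorem exists_isConformalFor_iff {γ : ℕ → A → ℝ} {G : (ℕ → A) → ℝ} [IsProbabilityMeasure ν]
    (hγ : ∀ n a, 0 < γ n a) (hG : Measurable G) (hG0 : ∀ x, 0 < G x) (hGi : Integrable G ν)
    (hGγ : ∀ n x b, G (update x n b) * γ n (x n) = G x * γ n b) :
    (∃ lam : ℝ, 0 < lam ∧ IsConformalFor G lam ν) ↔
      ∀ n, IsResamplingInvariant n (siteLaw (fun k a => ENNReal.ofReal (γ k a)) (n + 1)) ν := by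
  have hfactor : ∀ n, HasCoordFactor n (fun a => ENNReal.ofReal (γ n a))
      fun x => ENNReal.ofReal (G x) := fun n x b => by
    rw [← ENNReal.ofReal_mul (hG0 _).le, ← ENNReal.ofReal_mul (hG0 _).le, hGγ]
  rw [← exists_consMeasure_count_eq_iff (fun n a => (ENNReal.ofReal_pos.2 (hγ n a)).ne')
    (fun _ _ => ENNReal.ofReal_ne_top) hG.ennreal_ofReal
    (fun x => (ENNReal.ofReal_pos.2 (hG0 x)).ne') (fun _ => ENNReal.ofReal_ne_top)
    hGi.lintegral_lt_top.ne hfactor]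
  constructor
  · rintro ⟨lam, hlam, h⟩
    exact ⟨ENNReal.ofReal lam, (ENNReal.ofReal_pos.2 hlam).ne', ENNReal.ofReal_ne_top,
      (isConformalFor_iff hGi (fun x => (hG0 x).le) hlam.le).1 h⟩
  · rintro ⟨l, hl0, hlt, h⟩
    refine ⟨l.toReal, ENNReal.toReal_pos hl0 hlt,
      (isConformalFor_iff hGi (fun x => (hG0 x).le) ENNReal.toReal_nonneg).2 ?_⟩
    rw [h, ENNReal.ofReal_toReal hlt]

end SiteLaw

section Potential

variable {ι A : Type*} [Finite A]

lemma abs_log_le_log_iSup_max_inv {f : A → ℝ} (hf : ∀ a, 0 < f a) (a : A) :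
    |Real.log (f a)| ≤ Real.log (⨆ b, max (f b) (f b)⁻¹) := by
  have hle : max (f a) (f a)⁻¹ ≤ ⨆ b, max (f b) (f b)⁻¹ :=
    le_ciSup (f := fun b => max (f b) (f b)⁻¹) (finite_range _).bddAbove a
  rw [abs_le', ← Real.log_inv]
  exact ⟨Real.log_le_log (hf a) ((le_max_left _ _).trans hle),
    Real.log_le_log (inv_pos.2 (hf a)) ((le_max_right _ _).trans hle)⟩

lemma measurable_tprod_apply [Countable ι] [MeasurableSpace A] [MeasurableSingletonClass A]
    (g : ι → A → ℝ) : Measurable fun x : ι → A => ∏' i, g i (x i) :=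
  Measurable.tprod fun i => (measurable_of_finite (g i)).comp (measurable_pi_apply i)

variable {g : ι → A → ℝ} (hg : ∀ i a, 0 < g i a)
  (hs : Summable fun i => Real.log (⨆ a, max (g i a) (g i a)⁻¹))
include hg hs

lemma summable_log_apply (x : ι → A) : Summable fun i => Real.log (g i (x i)) :=
  .of_norm_bounded hs fun i => abs_log_le_log_iSup_max_inv (hg i) (x i)

lemma tprod_apply_eq_exp (x : ι → A) : ∏' i, g i (x i) = Real.exp (∑' i, Real.log (g i (x i))) :=
  (Real.rexp_tsum_eq_tprod (fun i => hg i (x i)) (summable_log_apply hg hs x)).symm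

lemma tprod_apply_pos (x : ι → A) : 0 < ∏' i, g i (x i) :=
  tprod_apply_eq_exp hg hs x ▸ Real.exp_pos _

lemma tprod_apply_le (x : ι → A) :
    ∏' i, g i (x i) ≤ Real.exp (∑' i, Real.log (⨆ a, max (g i a) (g i a)⁻¹)) := by
  rw [tprod_apply_eq_exp hg hs, Real.exp_le_exp]
  exact (summable_log_apply hg hs x).tsum_le_tsum
    (fun i => (le_abs_self _).trans (abs_log_le_log_iSup_max_inv (hg i) (x i))) hs

lemma integrable_tprod_apply [Countable ι] [MeasurableSpace A] [MeasurableSingletonClass A]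
    (ν : Measure (ι → A)) [IsFiniteMeasure ν] : Integrable (fun x => ∏' i, g i (x i)) ν :=
  .of_bound (measurable_tprod_apply g).aestronglyMeasurable _ <| ae_of_all _ fun x => by
    rw [Real.norm_of_nonneg (tprod_apply_pos hg hs x).le]
    exact tprod_apply_le hg hs x

lemma tprod_apply_update_mul [DecidableEq ι] (n : ι) (x : ι → A) (b : A) :
    (∏' i, g i (update x n b i)) * g n (x n) = (∏' i, g i (x i)) * g n b := by
  have hmul : ∀ x : ι → A, Multipliable fun i => g i (x i) := fun x =>
    Real.multipliable_of_summable_log (fun i => hg i (x i)) (summable_log_apply hg hs x)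
  have hupdate : (fun i => g i (update x n b i)) = update (fun i => g i (x i)) n (g n b) :=
    funext fun i => apply_update g x n b i
  refine ((hmul x).hasProd.update' n (g n b) ?_).symm
  rw [← hupdate]
  exact (hmul _).hasProd

end Potential

theorem stmt_7_general {A : Type*} [Finite A] [Nonempty A] [MeasurableSpace A]
    [MeasurableSingletonClass A]
    (g0 : ℝ) (hg0 : 0 < g0) (g : ℕ → A → ℝ) (hg : ∀ (k : ℕ) (a : A), 0 < g k a)
    (hsum : Summable fun k : ℕ => Real.log (⨆ a : A, max (g k a) (g k a)⁻¹)) :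
    ∃ μ : Measure (ℕ → A), IsProbabilityMeasure μ ∧
      (∃ lam : ℝ, 0 < lam ∧
        IsConformalFor (fun x => g0 * ∏' i : ℕ, g i (x i)) lam μ) ∧
      (∀ ν : Measure (ℕ → A), IsProbabilityMeasure ν →
        (∃ lam : ℝ, 0 < lam ∧
          IsConformalFor (fun x => g0 * ∏' i : ℕ, g i (x i)) lam ν) → ν = μ) ∧
      (∀ s : Set (ℕ → A), MeasurableSet s → shiftMap A ⁻¹' s = s →
        μ s = 0 ∨ μ s = 1) := by
  set p := siteLaw fun k a => ENNReal.ofReal (g k a)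
  have : ∀ n, IsFiniteMeasure (p n) :=
    isFiniteMeasure_siteLaw fun k a => (ENNReal.ofReal_pos.2 (hg k a)).ne'
  have : ∀ n, NeZero (p n) := siteLaw_neZero fun _ _ => ENNReal.ofReal_ne_top
  have hconformal : ∀ ν : Measure (ℕ → A), IsProbabilityMeasure ν →
      ((∃ lam : ℝ, 0 < lam ∧ IsConformalFor (fun x => g0 * ∏' i : ℕ, g i (x i)) lam ν) ↔
        ν = Measure.infinitePi fun n => (p (n + 1) univ)⁻¹ • p (n + 1)) := fun ν _ => by
    rw [exists_isConformalFor_iff hg ((measurable_tprod_apply g).const_mul g0)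
      (fun x => mul_pos hg0 (tprod_apply_pos hg hsum x))
      ((integrable_tprod_apply hg hsum ν).const_mul g0) fun n x b => by
        rw [mul_assoc, tprod_apply_update_mul hg hsum, mul_assoc],
      forall_isResamplingInvariant_iff, measure_univ, one_smul]
  exact ⟨_, inferInstance, (hconformal _ inferInstance).2 rfl, fun ν hν => (hconformal ν hν).1,
    fun s hs => (preErgodic_shiftMap_infinitePi _).prob_eq_zero_or_one hs⟩

/-- For a finite alphabet `A` and positive `g_i : A → ℝ₊` with
`∑_{i=0}^∞ ∑_{k=i}^∞ log max{‖g_k‖_∞, ‖g_k⁻¹‖_∞} < ∞`, there exists exactly one conformal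
probability measure for `g(x) = g_0 ∏_{i≥1} g_i(x_i)`, and this measure is ergodic for
the shift. -/
theorem stmt_7 {A : Type*} [Fintype A] [Nonempty A] [MeasurableSpace A]
    [MeasurableSingletonClass A]
    (g0 : ℝ) (hg0 : 0 < g0) (g : ℕ → A → ℝ) (hg : ∀ (k : ℕ) (a : A), 0 < g k a)
    (hsum : Summable fun p : ℕ × ℕ =>
      Real.log (⨆ a : A, max (g (p.1 + p.2) a) (g (p.1 + p.2) a)⁻¹)) :
    ∃ μ : Measure (ℕ → A), IsProbabilityMeasure μ ∧
      (∃ lam : ℝ, 0 < lam ∧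
        IsConformalFor (fun x => g0 * ∏' i : ℕ, g i (x i)) lam μ) ∧
      (∀ ν : Measure (ℕ → A), IsProbabilityMeasure ν →
        (∃ lam : ℝ, 0 < lam ∧
          IsConformalFor (fun x => g0 * ∏' i : ℕ, g i (x i)) lam ν) → ν = μ) ∧
      (∀ s : Set (ℕ → A), MeasurableSet s → shiftMap A ⁻¹' s = s →
        μ s = 0 ∨ μ s = 1) := by
  exact stmt_7_general g0 hg0 g hg <| by
    simpa only [Function.comp_def, zero_add] using hsum.comp_injective (Prod.mk_right_injective 0)
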